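/- arXiv:0705.3918 — 2 statements merged into one kernel-verified Lean document; each statement's English description precedes it below -/
import Mathlib

section
/- Let Φ be a Leonard system with parameter array ({θ_i}; {θ*_i}; {φ_i}; {ϕ_i}) and write φ = φ_1⋯φ_d. Then for 0 ≤ r ≤ d, E*_0 E_d E*_d E_r = (φ / (τ_d(θ_d) τ*_d(θ*_d))) · (ϕ_d ϕ_{d−1} ⋯ ϕ_{d−r+1}) / (φ_1 φ_2 ⋯ φ_r) · E*_0 E_r. -/
open Matrix Polynomial

/-- A Leonard system in the matrix algebra `Mat_{d+1}(K)`: multiplicity-free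
elements `A`, `Astar` with orderings `E`, `Estar` of their primitive idempotents
satisfying the irreducible-tridiagonality conditions. -/
structure LeonardSystem (K : Type*) [Field K] (d : ℕ) where
  A : Matrix (Fin (d+1)) (Fin (d+1)) K
  Astar : Matrix (Fin (d+1)) (Fin (d+1)) K
  E : Fin (d+1) → Matrix (Fin (d+1)) (Fin (d+1)) K
  Estar : Fin (d+1) → Matrix (Fin (d+1)) (Fin (d+1)) K
  θ : Fin (d+1) → K
  θs : Fin (d+1) → K
  θ_inj : Function.Injective θ
  θs_inj : Function.Injective θs
  E_ne : ∀ i, E i ≠ 0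
  Es_ne : ∀ i, Estar i ≠ 0
  E_mul : ∀ i j, E i * E j = if i = j then E i else 0
  Es_mul : ∀ i j, Estar i * Estar j = if i = j then Estar i else 0
  E_sum : ∑ i, E i = 1
  Es_sum : ∑ i, Estar i = 1
  A_eq : A = ∑ i, θ i • E i
  As_eq : Astar = ∑ i, θs i • Estar i
  trid0 : ∀ i j : Fin (d+1), ((i : ℤ) - (j : ℤ)).natAbs > 1 → E i * Astar * E j = 0
  trid1 : ∀ i j : Fin (d+1), ((i : ℤ) - (j : ℤ)).natAbs = 1 → E i * Astar * E j ≠ 0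
  strid0 : ∀ i j : Fin (d+1), ((i : ℤ) - (j : ℤ)).natAbs > 1 → Estar i * A * Estar j = 0
  strid1 : ∀ i j : Fin (d+1), ((i : ℤ) - (j : ℤ)).natAbs = 1 → Estar i * A * Estar j ≠ 0

namespace LeonardSystem

variable {K : Type*} [Field K] {d : ℕ}

/-- Eigenvalues indexed by `ℕ` (junk value outside range). -/
def θN (L : LeonardSystem K d) (i : ℕ) : K := if h : i < d + 1 then L.θ ⟨i, h⟩ else 0

def θsN (L : LeonardSystem K d) (i : ℕ) : K := if h : i < d + 1 then L.θs ⟨i, h⟩ else 0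

/-- `τ_i(A) = (A-θ₀)(A-θ₁)⋯(A-θ_{i-1})`. -/
def tauA (L : LeonardSystem K d) : ℕ → Matrix (Fin (d+1)) (Fin (d+1)) K
  | 0 => 1
  | i + 1 => L.tauA i * (L.A - L.θN i • 1)

/-- `η_i(A) = (A-θ_d)(A-θ_{d-1})⋯(A-θ_{d-i+1})`. -/
def etaA (L : LeonardSystem K d) : ℕ → Matrix (Fin (d+1)) (Fin (d+1)) K
  | 0 => 1
  | i + 1 => L.etaA i * (L.A - L.θN (d - i) • 1)

/-- `τ*_i(A*)`. -/
def tausA (L : LeonardSystem K d) : ℕ → Matrix (Fin (d+1)) (Fin (d+1)) K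
  | 0 => 1
  | i + 1 => L.tausA i * (L.Astar - L.θsN i • 1)

/-- `η*_i(A*)`. -/
def etasA (L : LeonardSystem K d) : ℕ → Matrix (Fin (d+1)) (Fin (d+1)) K
  | 0 => 1
  | i + 1 => L.etasA i * (L.Astar - L.θsN (d - i) • 1)

/-- Scalar `τ_i(x)`. -/
def tauS (L : LeonardSystem K d) (i : ℕ) (x : K) : K := ∏ j ∈ Finset.range i, (x - L.θN j)

/-- Scalar `η_i(x)`. -/
def etaS (L : LeonardSystem K d) (i : ℕ) (x : K) : K := ∏ j ∈ Finset.range i, (x - L.θN (d - j))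

/-- Scalar `τ*_i(x)`. -/
def tausS (L : LeonardSystem K d) (i : ℕ) (x : K) : K := ∏ j ∈ Finset.range i, (x - L.θsN j)

/-- Scalar `η*_i(x)`. -/
def etasS (L : LeonardSystem K d) (i : ℕ) (x : K) : K := ∏ j ∈ Finset.range i, (x - L.θsN (d - j))

/-- First split sequence `φ_i`. -/
noncomputable def varphi (L : LeonardSystem K d) (i : ℕ) : K :=
  (L.θsN 0 - L.θsN i) * (L.tauA i * L.Estar 0).trace / (L.tauA (i-1) * L.Estar 0).trace

/-- Second split sequence `ϕ_i`. -/
noncomputable def phi (L : LeonardSystem K d) (i : ℕ) : K :=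
  (L.θsN 0 - L.θsN i) * (L.etaA i * L.Estar 0).trace / (L.etaA (i-1) * L.Estar 0).trace

/-- `φ₁φ₂⋯φ_r`. -/
noncomputable def varphiProd (L : LeonardSystem K d) (r : ℕ) : K :=
  ∏ j ∈ Finset.range r, L.varphi (j + 1)

/-- `ϕ₁ϕ₂⋯ϕ_r`. -/
noncomputable def phiProd (L : LeonardSystem K d) (r : ℕ) : K :=
  ∏ j ∈ Finset.range r, L.phi (j + 1)

/-- `φ_d φ_{d-1} ⋯ φ_{d-r+1}`. -/
noncomputable def varphiRevProd (L : LeonardSystem K d) (r : ℕ) : K :=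
  ∏ j ∈ Finset.range r, L.varphi (d - j)

/-- `ϕ_d ϕ_{d-1} ⋯ ϕ_{d-r+1}`. -/
noncomputable def phiRevProd (L : LeonardSystem K d) (r : ℕ) : K :=
  ∏ j ∈ Finset.range r, L.phi (d - j)

end LeonardSystem

/-!
`E_r` is a nonzero multiple of `e_r = τ_r(A) η_{d-r}(A)`. As `τ_r η_{d-r}` is monic of degree `d`
and `A` is tridiagonal with respect to the `E*_i`, the product `E*_d e_r E*_0 = E*_d A^d E*_0` does
not depend on `r`. Hence the left-hand side for `r` differs from the one for `0` only by the ratio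
of the scalars `E*_0 e_0 E*_0` and `E*_0 e_r E*_0`, and both this ratio and the case `r = 0` are
computed with the split relation `E*_0 τ_{n+1}(A) (A* - θ*_{n+1}) = φ_{n+1} E*_0 τ_n(A)`, combined
for the ratio with its counterpart for `η` and `ϕ`.
-/

/-- The matrices `v fᵀ`, that is, those of rank at most one, in the form in which products with
them are easiest to compute. -/
def IsOuterProduct {m n K : Type*} [Mul K] (P : Matrix m n K) : Prop :=
  ∃ v f, P = vecMulVec v f

-- `Matrix.vecMulVec_eq_zero` has the same index type for `v` and `f`.
theorem vecMulVec_eq_zero_iff {m n R : Type*} [MulZeroClass R] [NoZeroDivisors R] {v : m → R}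
    {f : n → R} : vecMulVec v f = 0 ↔ v = 0 ∨ f = 0 := by
  simp only [← Matrix.ext_iff, vecMulVec_apply, Matrix.zero_apply, mul_eq_zero, funext_iff,
    Pi.zero_apply, forall_or_left, forall_or_right]

section OuterProduct

variable {l m n o : Type*} [Fintype m] [Fintype n]

theorem vecMulVec_mul_mul_vecMulVec {R : Type*} [CommSemiring R] (v : l → R) (f : m → R)
    (X : Matrix m n R) (w : n → R) (g : o → R) :
    vecMulVec v f * X * vecMulVec w g = (f ⬝ᵥ X *ᵥ w) • vecMulVec v g := by
  rw [Matrix.mul_assoc, mul_vecMulVec, vecMulVec_mul_vecMulVec, vecMulVec_smul]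

theorem IsOuterProduct.mul_mul_eq_zero_iff {R : Type*} [Semiring R] [NoZeroDivisors R]
    {P : Matrix m n R} (hP : IsOuterProduct P) (X : Matrix l m R) (Y : Matrix n o R) :
    X * P * Y = 0 ↔ X * P = 0 ∨ P * Y = 0 := by
  obtain ⟨v, f, rfl⟩ := hP
  have of_v : v = 0 → X *ᵥ v = 0 := fun h ↦ by rw [h, mulVec_zero]
  have of_f : f = 0 → f ᵥ* Y = 0 := fun h ↦ by rw [h, zero_vecMul]
  rw [mul_vecMulVec, vecMulVec_mul, vecMulVec_mul, vecMulVec_eq_zero_iff, vecMulVec_eq_zero_iff,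
    vecMulVec_eq_zero_iff]
  tauto

theorem IsOuterProduct.mul_mul_ne_zero {R : Type*} [Semiring R] [NoZeroDivisors R]
    {P : Matrix m n R} (hP : IsOuterProduct P) {X : Matrix l m R} {Y : Matrix n o R}
    (hX : X * P ≠ 0) (hY : P * Y ≠ 0) : X * P * Y ≠ 0 :=
  fun h ↦ ((hP.mul_mul_eq_zero_iff X Y).mp h).elim hX hY

variable {K : Type*} [Field K]

theorem IsOuterProduct.exists_mul_mul_eq_smul {P : Matrix l m K} {Q : Matrix n o K}
    (hP : IsOuterProduct P) (hQ : IsOuterProduct Q) {X : Matrix m n K} (hX : P * X * Q ≠ 0)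
    (Y : Matrix m n K) : ∃ c : K, P * Y * Q = c • (P * X * Q) := by
  obtain ⟨v, f, rfl⟩ := hP
  obtain ⟨w, g, rfl⟩ := hQ
  rw [vecMulVec_mul_mul_vecMulVec] at hX ⊢
  refine ⟨(f ⬝ᵥ Y *ᵥ w) / (f ⬝ᵥ X *ᵥ w), ?_⟩
  rw [vecMulVec_mul_mul_vecMulVec, smul_smul, div_mul_cancel₀ _ (left_ne_zero_of_smul hX)]

theorem IsOuterProduct.trace_eq_one {P : Matrix n n K} (hP : IsOuterProduct P)
    (hidem : IsIdempotentElem P) (hne : P ≠ 0) : P.trace = 1 := by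
  obtain ⟨v, f, rfl⟩ := hP
  have h : (f ⬝ᵥ v) • vecMulVec v f = (1 : K) • vecMulVec v f := by
    rw [one_smul, ← vecMulVec_smul, ← vecMulVec_mul_vecMulVec, hidem.eq]
  rw [trace_vecMulVec, dotProduct_comm, smul_left_injective K hne h]

/-- The images of the `e i` are independent, and there are as many of them as the dimension. -/
theorem isOuterProduct_of_orthogonalIdempotents [DecidableEq n] {e : n → Matrix n n K}
    (he : OrthogonalIdempotents e) (hne : ∀ i, e i ≠ 0) (i : n) : IsOuterProduct (e i) := by
  have exists_fixed (j : n) : ∃ v, e j *ᵥ v = v ∧ v ≠ 0 := by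
    obtain ⟨w, hw⟩ : ∃ w, e j *ᵥ w ≠ 0 := by
      contrapose! hne
      exact ⟨j, ext_of_mulVec_single fun k ↦ by rw [hne, zero_mulVec]⟩
    exact ⟨e j *ᵥ w, by rw [mulVec_mulVec, (he.idem j).eq], hw⟩
  choose v hv hv0 using exists_fixed
  have mulVec_v (j k : n) : e j *ᵥ v k = if j = k then v k else 0 := by
    rw [← hv k, mulVec_mulVec, he.mul_eq]
    split_ifs with h
    · rw [h]
    · rw [zero_mulVec]
  have hli : LinearIndependent K v := by
    refine Fintype.linearIndependent_iff.mpr fun c hc j ↦ ?_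
    have h := congrArg (e j *ᵥ ·) hc
    simp only [mulVec_sum, mulVec_smul, mulVec_v, mulVec_zero, smul_ite, smul_zero,
      Finset.sum_ite_eq, Finset.mem_univ, if_true] at h
    exact (smul_eq_zero.mp h).resolve_right (hv0 j)
  let b := basisOfLinearIndependentOfCardEqFinrank' v hli
    (Module.finrank_fintype_fun_eq_card K).symm
  have h : (e i).mulVecLin = (b.coord i).smulRight (v i) := b.ext fun k ↦ by
    have hbk : b k = v k := by simp [b]
    rw [LinearMap.smulRight_apply, Module.Basis.coord_apply, Module.Basis.repr_self, hbk,
      mulVecLin_apply, mulVec_v, Finsupp.single_apply]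
    by_cases hik : i = k
    · simp [hik]
    · simp [hik, Ne.symm hik]
  refine ⟨v i, fun j ↦ b.coord i (Pi.single j 1), ?_⟩
  ext a j
  have := congrFun (LinearMap.congr_fun h (Pi.single j 1)) a
  simpa [vecMulVec_apply, mul_comm] using this

end OuterProduct

theorem aeval_mul_of_mul_eq_smul {R S : Type*} [CommSemiring R] [Semiring S] [Algebra R S]
    {a m : S} {c : R} (h : a * m = c • m) (p : R[X]) : aeval a p * m = p.eval c • m := by
  induction p using Polynomial.induction_on' with
  | add p q hp hq => rw [map_add, add_mul, hp, hq, eval_add, add_smul]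
  | monomial k r =>
    have hpow : a ^ k * m = c ^ k • m := by
      induction k with
      | zero => simp
      | succ k ih => rw [pow_succ', mul_assoc, ih, mul_smul_comm, h, smul_smul, pow_succ]
    rw [aeval_monomial, eval_monomial, mul_assoc, hpow, ← Algebra.smul_def, smul_smul]

theorem mul_sub_smul_one_mul_of_mul_eq_zero {R S : Type*} [CommRing R] [Ring S] [Algebra R S]
    {x z : S} (h : x * z = 0) (b : S) (c : R) : x * (b - c • 1) * z = x * b * z := by
  rw [mul_sub, sub_mul, mul_smul_one, smul_mul_assoc, h, smul_zero, sub_zero]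

namespace LeonardSystem

variable {K : Type*} [Field K] {d : ℕ} (L : LeonardSystem K d)

/-- The dual Leonard system `Φ*`, in which `A` and `A*` exchange roles. -/
@[simps]
def dual : LeonardSystem K d where
  A := L.Astar
  Astar := L.A
  E := L.Estar
  Estar := L.E
  θ := L.θs
  θs := L.θ
  θ_inj := L.θs_inj
  θs_inj := L.θ_inj
  E_ne := L.Es_ne
  Es_ne := L.E_ne
  E_mul := L.Es_mul
  Es_mul := L.E_mul
  E_sum := L.Es_sum
  Es_sum := L.E_sum
  A_eq := L.As_eq
  As_eq := L.A_eq
  trid0 := L.strid0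
  trid1 := L.strid1
  strid0 := L.trid0
  strid1 := L.trid1

/-- The Leonard system `Φ^⇓`, in which the ordering of the `E i` is reversed. It exchanges `τ`
with `η`, and the first split sequence with the second. -/
@[simps]
def down : LeonardSystem K d where
  A := L.A
  Astar := L.Astar
  E i := L.E i.rev
  Estar := L.Estar
  θ i := L.θ i.rev
  θs := L.θs
  θ_inj := L.θ_inj.comp Fin.rev_injective
  θs_inj := L.θs_inj
  E_ne i := L.E_ne i.rev
  Es_ne := L.Es_ne
  E_mul i j := by simp only [L.E_mul, Fin.rev_inj]
  Es_mul := L.Es_mul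
  E_sum := (Equiv.sum_comp Fin.revPerm L.E).trans L.E_sum
  Es_sum := L.Es_sum
  A_eq := L.A_eq.trans (Equiv.sum_comp Fin.revPerm fun i ↦ L.θ i • L.E i).symm
  As_eq := L.As_eq
  trid0 i j h := L.trid0 _ _ (by simp only [Fin.val_rev]; omega)
  trid1 i j h := L.trid1 _ _ (by simp only [Fin.val_rev]; omega)
  strid0 := L.strid0
  strid1 := L.strid1

/-- The Leonard system of the transposed matrices, with the same orderings. -/
@[simps]
def transpose : LeonardSystem K d where
  A := L.Aᵀ
  Astar := L.Astarᵀ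
  E i := (L.E i)ᵀ
  Estar i := (L.Estar i)ᵀ
  θ := L.θ
  θs := L.θs
  θ_inj := L.θ_inj
  θs_inj := L.θs_inj
  E_ne i := transpose_eq_zero.not.mpr (L.E_ne i)
  Es_ne i := transpose_eq_zero.not.mpr (L.Es_ne i)
  E_mul i j := by rw [← transpose_mul, L.E_mul]; split_ifs <;> simp_all
  Es_mul i j := by rw [← transpose_mul, L.Es_mul]; split_ifs <;> simp_all
  E_sum := by rw [← transpose_sum, L.E_sum, transpose_one]
  Es_sum := by rw [← transpose_sum, L.Es_sum, transpose_one]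
  A_eq := by simp only [L.A_eq, transpose_sum, transpose_smul]
  As_eq := by simp only [L.As_eq, transpose_sum, transpose_smul]
  trid0 i j h := by
    rw [← transpose_mul, ← transpose_mul, ← Matrix.mul_assoc, L.trid0 j i (by omega),
      transpose_zero]
  trid1 i j h := by
    rw [← transpose_mul, ← transpose_mul, ← Matrix.mul_assoc, Ne, transpose_eq_zero]
    exact L.trid1 j i (by omega)
  strid0 i j h := by
    rw [← transpose_mul, ← transpose_mul, ← Matrix.mul_assoc, L.strid0 j i (by omega),
      transpose_zero]
  strid1 i j h := by
    rw [← transpose_mul, ← transpose_mul, ← Matrix.mul_assoc, Ne, transpose_eq_zero]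
    exact L.strid1 j i (by omega)

theorem isOuterProduct_E (i : Fin (d + 1)) : IsOuterProduct (L.E i) :=
  isOuterProduct_of_orthogonalIdempotents (OrthogonalIdempotents.iff_mul_eq.mpr L.E_mul) L.E_ne i

theorem isOuterProduct_Es (i : Fin (d + 1)) : IsOuterProduct (L.Estar i) :=
  L.dual.isOuterProduct_E i

theorem A_mul_E (i : Fin (d + 1)) : L.A * L.E i = L.θ i • L.E i := by
  simp only [L.A_eq, Finset.sum_mul, Matrix.smul_mul, L.E_mul, smul_ite, smul_zero,
    Finset.sum_ite_eq', Finset.mem_univ, if_true]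

theorem aeval_A_mul_E (p : K[X]) (i : Fin (d + 1)) :
    aeval L.A p * L.E i = p.eval (L.θ i) • L.E i :=
  aeval_mul_of_mul_eq_smul (L.A_mul_E i) p

theorem eq_sum_mul_E (X : Matrix (Fin (d + 1)) (Fin (d + 1)) K) : X = ∑ i, X * L.E i := by
  rw [← Finset.mul_sum, L.E_sum, Matrix.mul_one]

theorem aeval_A_eq_sum (p : K[X]) : aeval L.A p = ∑ i, p.eval (L.θ i) • L.E i := by
  simp only [← aeval_A_mul_E, ← eq_sum_mul_E]

/-! ### The polynomials `τ` -/

/-- The polynomial `τ_n = (X - θ₀)(X - θ₁)⋯(X - θ_{n-1})`, of which `tauS` is the evaluation at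
scalars and `tauA` the evaluation at `A`. -/
noncomputable def tauPoly (n : ℕ) : K[X] := Lagrange.nodal (Finset.range n) L.θN

theorem eval_tauPoly (n : ℕ) (x : K) : (L.tauPoly n).eval x = L.tauS n x :=
  Lagrange.eval_nodal

theorem monic_tauPoly (n : ℕ) : (L.tauPoly n).Monic :=
  Lagrange.nodal_monic

theorem natDegree_tauPoly (n : ℕ) : (L.tauPoly n).natDegree = n := by
  rw [tauPoly, Lagrange.natDegree_nodal, Finset.card_range]

theorem tauPoly_succ (n : ℕ) : L.tauPoly (n + 1) = L.tauPoly n * (X - C (L.θN n)) := by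
  rw [tauPoly, tauPoly, Lagrange.nodal_eq, Lagrange.nodal_eq, Finset.prod_range_succ]

theorem tauA_eq_aeval (n : ℕ) : L.tauA n = aeval L.A (L.tauPoly n) := by
  induction n with
  | zero => simp [tauA, tauPoly]
  | succ n ih =>
    rw [tauA, ih, tauPoly_succ, map_mul, map_sub, aeval_X, aeval_C, Algebra.algebraMap_eq_smul_one]

theorem tauA_eq_sum (n : ℕ) : L.tauA n = ∑ i, L.tauS n (L.θ i) • L.E i := by
  simp only [tauA_eq_aeval, aeval_A_eq_sum, eval_tauPoly]

theorem tauA_succ' (n : ℕ) : L.tauA (n + 1) = (L.A - L.θN n • 1) * L.tauA n := by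
  rw [tauA_eq_aeval, tauA_eq_aeval, tauPoly_succ, mul_comm, map_mul, map_sub, aeval_X, aeval_C,
    Algebra.algebraMap_eq_smul_one]

theorem θN_val (i : Fin (d + 1)) : L.θN i = L.θ i :=
  dif_pos i.isLt

theorem tauS_eq_zero_iff {n : ℕ} {i : Fin (d + 1)} (hn : n ≤ d + 1) :
    L.tauS n (L.θ i) = 0 ↔ (i : ℕ) < n := by
  rw [tauS, Finset.prod_eq_zero_iff]
  constructor
  · rintro ⟨j, hj, h⟩
    rw [Finset.mem_range] at hj
    rw [sub_eq_zero, θN, dif_pos (by omega), L.θ_inj.eq_iff] at h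
    rwa [h]
  · exact fun h ↦ ⟨i, Finset.mem_range.mpr h, by rw [θN_val, sub_self]⟩

theorem tauA_last : L.tauA d = L.tauS d (L.θ (Fin.last d)) • L.E (Fin.last d) := by
  rw [tauA_eq_sum, Fintype.sum_eq_single (Fin.last d) fun i hi ↦ ?_]
  rw [(L.tauS_eq_zero_iff (by omega)).mpr (Fin.val_lt_last hi), zero_smul]

theorem down_θN {n : ℕ} (hn : n ≤ d) : L.down.θN n = L.θN (d - n) := by
  rw [θN, θN, dif_pos (by omega), dif_pos (by omega), down_θ]
  congr 1
  ext
  simp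

theorem down_tauA {n : ℕ} (hn : n ≤ d + 1) : L.down.tauA n = L.etaA n := by
  induction n with
  | zero => rfl
  | succ n ih => rw [tauA, etaA, ih (by omega), down_θN _ (by omega), down_A]

theorem transpose_tauA (n : ℕ) : L.transpose.tauA n = (L.tauA n)ᵀ := by
  induction n with
  | zero => simp [tauA]
  | succ n ih =>
    have hθ : L.transpose.θN n = L.θN n := rfl
    rw [tauA, L.tauA_succ', Matrix.transpose_mul, ih, hθ, transpose_A, transpose_sub,
      transpose_smul, transpose_one]

theorem down_varphi {n : ℕ} (hn : n ≤ d + 1) : L.down.varphi n = L.phi n := by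
  rw [varphi, phi, down_tauA _ hn, down_tauA _ (by omega)]
  rfl

theorem transpose_varphi (n : ℕ) : L.transpose.varphi n = L.varphi n := by
  have trace_tauA (k : ℕ) :
      (L.transpose.tauA k * L.transpose.Estar 0).trace = (L.tauA k * L.Estar 0).trace := by
    rw [transpose_tauA, transpose_Estar, ← Matrix.transpose_mul, trace_transpose, trace_mul_comm]
  rw [varphi, trace_tauA, trace_tauA]
  rfl

/-! ### Polynomials in `A` between the dual idempotents -/

theorem mul_eq_sum_mul_Es_mul (X Y : Matrix (Fin (d + 1)) (Fin (d + 1)) K) :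
    X * Y = ∑ k, X * L.Estar k * Y := by
  rw [← Finset.sum_mul, ← Finset.mul_sum, L.Es_sum, Matrix.mul_one]

theorem Es_mul_pow_mul_Es_eq_zero {m : ℕ} {i j : Fin (d + 1)} (h : m < ((i : ℤ) - j).natAbs) :
    L.Estar i * L.A ^ m * L.Estar j = 0 := by
  induction m generalizing j with
  | zero =>
    rw [pow_zero, Matrix.mul_one, L.Es_mul, if_neg]
    rintro rfl
    simp at h
  | succ m ih =>
    rw [pow_succ, ← Matrix.mul_assoc, Matrix.mul_assoc _ L.A, mul_eq_sum_mul_Es_mul L]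
    refine Finset.sum_eq_zero fun k _ ↦ ?_
    by_cases hk : m < ((i : ℤ) - k).natAbs
    · rw [ih hk, Matrix.zero_mul]
    · rw [Matrix.mul_assoc, ← Matrix.mul_assoc (L.Estar k), L.strid0 k j (by omega),
        Matrix.mul_zero]

theorem Es_mul_pow_mul_Es_ne_zero {m : ℕ} {i j : Fin (d + 1)} (h : (j : ℕ) = i + m) :
    L.Estar i * L.A ^ m * L.Estar j ≠ 0 := by
  induction m generalizing j with
  | zero =>
    rw [Fin.ext h, pow_zero, Matrix.mul_one, L.Es_mul, if_pos rfl]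
    exact L.Es_ne i
  | succ m ih =>
    have hk : (i : ℕ) + m < d + 1 := by omega
    rw [pow_succ, ← Matrix.mul_assoc, Matrix.mul_assoc _ L.A, mul_eq_sum_mul_Es_mul L,
      Fintype.sum_eq_single ⟨i + m, hk⟩]
    · refine (L.isOuterProduct_Es _).mul_mul_ne_zero (ih rfl) ?_
      rw [← Matrix.mul_assoc]
      exact L.strid1 _ _ (by simp only; omega)
    · intro k hki
      have hki' : (k : ℕ) ≠ i + m := fun h ↦ hki (Fin.ext h)
      rcases lt_or_ge (k : ℕ) (i + m) with hlt | hge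
      · rw [Matrix.mul_assoc, ← Matrix.mul_assoc (L.Estar k), L.strid0 k j (by omega),
          Matrix.mul_zero]
      · rw [L.Es_mul_pow_mul_Es_eq_zero (by omega), Matrix.zero_mul]

theorem Es_mul_aeval_mul_Es {p : K[X]} {m : ℕ} {i j : Fin (d + 1)} (hp : p.natDegree ≤ m)
    (hm : m ≤ ((i : ℤ) - j).natAbs) :
    L.Estar i * aeval L.A p * L.Estar j = p.coeff m • (L.Estar i * L.A ^ m * L.Estar j) := by
  have lower_terms : ∀ k ∈ Finset.range m,
      L.Estar i * (p.coeff k • L.A ^ k) * L.Estar j = 0 := fun k hk ↦ by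
    rw [Matrix.mul_smul, Matrix.smul_mul,
      L.Es_mul_pow_mul_Es_eq_zero ((Finset.mem_range.mp hk).trans_le hm), smul_zero]
  rw [aeval_eq_sum_range' (Nat.lt_succ_of_le hp), Finset.mul_sum, Finset.sum_mul,
    Finset.sum_range_succ, Finset.sum_eq_zero lower_terms, zero_add, Matrix.mul_smul,
    Matrix.smul_mul]

theorem Es_mul_aeval_mul_Es_eq_zero {p : K[X]} {i j : Fin (d + 1)}
    (hp : p.natDegree < ((i : ℤ) - j).natAbs) : L.Estar i * aeval L.A p * L.Estar j = 0 := by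
  rw [L.Es_mul_aeval_mul_Es le_rfl hp.le, L.Es_mul_pow_mul_Es_eq_zero hp, smul_zero]

theorem Es_mul_aeval_mul_Es_ne_zero {p : K[X]} {i j : Fin (d + 1)} (hp : p.Monic)
    (h : (j : ℕ) = i + p.natDegree) : L.Estar i * aeval L.A p * L.Estar j ≠ 0 := by
  rw [L.Es_mul_aeval_mul_Es le_rfl (by omega), hp.coeff_natDegree, one_smul]
  exact L.Es_mul_pow_mul_Es_ne_zero h

/-! ### The products `τ_n η_m` -/

theorem tauA_mul_down_tauA_eq_aeval (n m : ℕ) :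
    L.tauA n * L.down.tauA m = aeval L.A (L.tauPoly n * L.down.tauPoly m) := by
  rw [tauA_eq_aeval, tauA_eq_aeval, map_mul, down_A]

theorem tauA_mul_down_tauA_eq_sum (n m : ℕ) :
    L.tauA n * L.down.tauA m = ∑ i, (L.tauS n (L.θ i) * L.down.tauS m (L.θ i)) • L.E i := by
  simp only [tauA_mul_down_tauA_eq_aeval, aeval_A_eq_sum, eval_mul, eval_tauPoly]

theorem down_tauS_eq_zero_iff {n : ℕ} {i : Fin (d + 1)} (hn : n ≤ d + 1) :
    L.down.tauS n (L.θ i) = 0 ↔ d < i + n := by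
  have h := L.down.tauS_eq_zero_iff (i := i.rev) hn
  rw [down_θ, Fin.rev_rev, Fin.val_rev] at h
  rw [h]
  omega

theorem tauA_mul_down_tauA_eq_zero {n m : ℕ} (hn : n ≤ d + 1) (hm : m ≤ d + 1) (h : d < n + m) :
    L.tauA n * L.down.tauA m = 0 := by
  rw [tauA_mul_down_tauA_eq_sum]
  refine Finset.sum_eq_zero fun i _ ↦ ?_
  rw [mul_eq_zero.mpr, zero_smul]
  rw [tauS_eq_zero_iff _ hn, down_tauS_eq_zero_iff _ hm]
  omega

theorem exists_tauA_mul_down_tauA_eq_smul_E (r : Fin (d + 1)) :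
    ∃ c : K, c ≠ 0 ∧ L.tauA r * L.down.tauA (d - r) = c • L.E r := by
  refine ⟨L.tauS r (L.θ r) * L.down.tauS (d - r) (L.θ r), mul_ne_zero ?_ ?_, ?_⟩
  · rw [Ne, tauS_eq_zero_iff _ (by omega)]
    omega
  · rw [Ne, down_tauS_eq_zero_iff _ (by omega)]
    omega
  · rw [tauA_mul_down_tauA_eq_sum, Fintype.sum_eq_single r fun i hi ↦ ?_]
    rw [mul_eq_zero.mpr, zero_smul]
    rw [tauS_eq_zero_iff _ (by omega), down_tauS_eq_zero_iff _ (by omega)]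
    have hi' : (i : ℕ) ≠ r := Fin.val_ne_of_ne hi
    omega

theorem monic_tauPoly_mul_down_tauPoly (n m : ℕ) : (L.tauPoly n * L.down.tauPoly m).Monic :=
  (L.monic_tauPoly n).mul (L.down.monic_tauPoly m)

theorem natDegree_tauPoly_mul_down_tauPoly (n m : ℕ) :
    (L.tauPoly n * L.down.tauPoly m).natDegree = n + m := by
  rw [(L.monic_tauPoly n).natDegree_mul (L.down.monic_tauPoly m), natDegree_tauPoly,
    natDegree_tauPoly]

theorem Es_last_mul_tauA_mul_down_tauA_mul_Es_zero {n m : ℕ} (h : n + m = d) :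
    L.Estar (Fin.last d) * (L.tauA n * L.down.tauA m) * L.Estar 0 =
      L.Estar (Fin.last d) * L.A ^ d * L.Estar 0 := by
  have hdeg : (L.tauPoly n * L.down.tauPoly m).natDegree = d :=
    (L.natDegree_tauPoly_mul_down_tauPoly n m).trans h
  have hcoeff := (L.monic_tauPoly_mul_down_tauPoly n m).coeff_natDegree
  rw [hdeg] at hcoeff
  rw [tauA_mul_down_tauA_eq_aeval, L.Es_mul_aeval_mul_Es hdeg.le (by simp), hcoeff, one_smul]

theorem Es_zero_mul_E_ne_zero (r : Fin (d + 1)) : L.Estar 0 * L.E r ≠ 0 := by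
  intro h
  obtain ⟨c, -, hc⟩ := L.exists_tauA_mul_down_tauA_eq_smul_E r
  refine L.Es_mul_aeval_mul_Es_ne_zero (i := 0) (j := Fin.last d)
    (L.monic_tauPoly_mul_down_tauPoly r (d - r)) ?_ ?_
  · rw [natDegree_tauPoly_mul_down_tauPoly, Fin.val_last, Fin.val_zero]
    omega
  · rw [← tauA_mul_down_tauA_eq_aeval, hc, Matrix.mul_smul, h, smul_zero, Matrix.zero_mul]

theorem E_mul_Es_zero_ne_zero (r : Fin (d + 1)) : L.E r * L.Estar 0 ≠ 0 := by
  have h := L.transpose.Es_zero_mul_E_ne_zero r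
  rwa [transpose_Estar, transpose_E, ← Matrix.transpose_mul, Ne, transpose_eq_zero] at h

/-- As `E r` has rank one and `E r * E*_0 ≠ 0`, nothing is lost by the trailing `E*_0`. -/
theorem mul_E_eq_smul_iff (X : Matrix (Fin (d + 1)) (Fin (d + 1)) K) (r : Fin (d + 1)) (c : K) :
    X * L.E r = c • (L.Estar 0 * L.E r) ↔
      X * (L.tauA r * L.down.tauA (d - r)) * L.Estar 0 =
        c • (L.Estar 0 * (L.tauA r * L.down.tauA (d - r)) * L.Estar 0) := by
  obtain ⟨b, hb, hE⟩ := L.exists_tauA_mul_down_tauA_eq_smul_E r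
  have cancel := (L.isOuterProduct_E r).mul_mul_eq_zero_iff (X - c • L.Estar 0) (L.Estar 0)
  simp only [L.E_mul_Es_zero_ne_zero r, or_false, Matrix.sub_mul, Matrix.smul_mul,
    sub_eq_zero] at cancel
  simp only [hE, Matrix.mul_smul, Matrix.smul_mul]
  rw [smul_comm c b, smul_right_inj hb, cancel]

/-! ### The split sequences -/

/-- The column spaces of `E_0, …, E_{n-1}` and of `E*_n, …, E*_d` together span `K^{d+1}`. -/
theorem eq_zero_of_mul_E_of_mul_Es {Y : Matrix (Fin (d + 1)) (Fin (d + 1)) K} (n : Fin (d + 1))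
    (hE : ∀ i < n, Y * L.E i = 0) (hEs : ∀ j, n ≤ j → Y * L.Estar j = 0) : Y = 0 := by
  let p : K[X] := Lagrange.nodal (Finset.Ici n) L.θ
  have hdeg : p.natDegree = d + 1 - n := by rw [Lagrange.natDegree_nodal, Fin.card_Ici]
  have hYp : Y * aeval L.A p = 0 := by
    rw [aeval_A_eq_sum, Finset.mul_sum]
    refine Finset.sum_eq_zero fun i _ ↦ ?_
    rw [Matrix.mul_smul]
    rcases lt_or_ge i n with h | h
    · rw [hE i h, smul_zero]
    · rw [Lagrange.eval_nodal_at_node (Finset.mem_Ici.mpr h), zero_smul]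
  rw [L.dual.eq_sum_mul_E Y]
  refine Finset.sum_eq_zero fun j _ ↦ ?_
  induction j using WellFoundedGT.induction with
  | ind j ih =>
    rcases le_or_gt n j with hj | hj
    · exact hEs j hj
    obtain ⟨l, hl⟩ : ∃ l : Fin (d + 1), (l : ℕ) = j + p.natDegree :=
      ⟨⟨j + p.natDegree, by omega⟩, rfl⟩
    have hjl : Y * L.Estar j * (aeval L.A p * L.Estar l) = 0 :=
      calc Y * L.Estar j * (aeval L.A p * L.Estar l)
        _ = ∑ k, Y * L.Estar k * (aeval L.A p * L.Estar l) := by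
          symm
          refine Fintype.sum_eq_single j fun k hkj ↦ ?_
          rcases lt_or_gt_of_ne hkj with hk | hk
          · rw [Matrix.mul_assoc, ← Matrix.mul_assoc (L.Estar k),
              L.Es_mul_aeval_mul_Es_eq_zero (by omega), Matrix.mul_zero]
          · have hYk : Y * L.Estar k = 0 := ih k hk (Finset.mem_univ k)
            rw [hYk, Matrix.zero_mul]
        _ = Y * aeval L.A p * L.Estar l := by
          rw [← mul_eq_sum_mul_Es_mul, Matrix.mul_assoc]
        _ = 0 := by rw [hYp, Matrix.zero_mul]
    refine (((L.isOuterProduct_Es j).mul_mul_eq_zero_iff _ _).mp hjl).resolve_right ?_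
    rw [← Matrix.mul_assoc]
    exact L.Es_mul_aeval_mul_Es_ne_zero Lagrange.nodal_monic hl

theorem Es_zero_mul_tauA_mul_Es_eq_zero {n : ℕ} {j : Fin (d + 1)} (h : n < j) :
    L.Estar 0 * L.tauA n * L.Estar j = 0 := by
  rw [tauA_eq_aeval, L.Es_mul_aeval_mul_Es_eq_zero]
  rw [natDegree_tauPoly, Fin.val_zero]
  omega

theorem Es_zero_mul_tauA_mul_Es_ne_zero (n : Fin (d + 1)) :
    L.Estar 0 * L.tauA n * L.Estar n ≠ 0 := by
  rw [tauA_eq_aeval]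
  refine L.Es_mul_aeval_mul_Es_ne_zero (L.monic_tauPoly n) ?_
  rw [natDegree_tauPoly, Fin.val_zero, zero_add]

theorem tauA_mul_Astar_mul_E {r i : Fin (d + 1)} (h : i < r) :
    L.tauA r * L.Astar * L.E i = L.tauS r (L.θ r) • (L.E r * L.Astar * L.E i) := by
  rw [tauA_eq_sum, Finset.sum_mul, Finset.sum_mul, Fintype.sum_eq_single r]
  · rw [Matrix.smul_mul, Matrix.smul_mul]
  · intro k hk
    rcases lt_or_gt_of_ne hk with hk | hk
    · rw [(L.tauS_eq_zero_iff (by omega)).mpr hk, zero_smul, Matrix.zero_mul, Matrix.zero_mul]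
    · rw [Matrix.smul_mul, Matrix.smul_mul, L.trid0 k i (by omega), smul_zero]

theorem tauA_mul_E_eq_zero {n : ℕ} {i : Fin (d + 1)} (hn : n ≤ d + 1) (h : (i : ℕ) < n) :
    L.tauA n * L.E i = 0 := by
  rw [tauA_eq_aeval, aeval_A_mul_E, eval_tauPoly, (L.tauS_eq_zero_iff hn).mpr h, zero_smul]

theorem Astar_sub_mul_Es (c : K) (j : Fin (d + 1)) :
    (L.Astar - c • 1) * L.Estar j = (L.θs j - c) • L.Estar j := by
  rw [Matrix.sub_mul, Matrix.smul_mul, Matrix.one_mul, sub_smul]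
  exact congrArg (· - c • L.Estar j) (L.dual.A_mul_E j)

theorem θsN_val (i : Fin (d + 1)) : L.θsN i = L.θs i :=
  L.dual.θN_val i

theorem Es_zero_mul_tauA_mul_Astar_sub_mul_Es_eq_zero {n : ℕ} {j : Fin (d + 1)} (h : n ≤ j) :
    L.Estar 0 * L.tauA n * (L.Astar - L.θsN n • 1) * L.Estar j = 0 := by
  rw [Matrix.mul_assoc, Astar_sub_mul_Es, Matrix.mul_smul]
  obtain rfl | h := h.eq_or_lt
  · rw [θsN_val, sub_self, zero_smul]
  · rw [L.Es_zero_mul_tauA_mul_Es_eq_zero h, smul_zero]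

theorem Es_zero_mul_tauA_mul_Astar_sub_mul_E {r i : Fin (d + 1)} (h : i < r) (c : K) :
    L.Estar 0 * L.tauA r * (L.Astar - c • 1) * L.E i =
      L.tauS r (L.θ r) • (L.Estar 0 * L.E r * (L.Astar * L.E i)) := by
  have hzero : L.Estar 0 * L.tauA r * L.E i = 0 := by
    rw [Matrix.mul_assoc, L.tauA_mul_E_eq_zero (by omega) h, Matrix.mul_zero]
  rw [mul_sub_smul_one_mul_of_mul_eq_zero hzero, Matrix.mul_assoc, Matrix.mul_assoc,
    ← Matrix.mul_assoc (L.tauA r), L.tauA_mul_Astar_mul_E h, Matrix.mul_smul]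
  simp only [Matrix.mul_assoc]

theorem Es_zero_mul_tauA_mul_Astar_sub_mul_E_eq_zero {r i : Fin (d + 1)} (h : (i : ℕ) + 1 < r)
    (c : K) : L.Estar 0 * L.tauA r * (L.Astar - c • 1) * L.E i = 0 := by
  rw [L.Es_zero_mul_tauA_mul_Astar_sub_mul_E (by omega), Matrix.mul_assoc,
    ← Matrix.mul_assoc (L.E r), L.trid0 r i (by omega), Matrix.mul_zero, smul_zero]

theorem Es_zero_mul_tauA_mul_Astar_sub_mul_E_ne_zero {r i : Fin (d + 1)} (h : (r : ℕ) = i + 1)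
    (c : K) : L.Estar 0 * L.tauA r * (L.Astar - c • 1) * L.E i ≠ 0 := by
  rw [L.Es_zero_mul_tauA_mul_Astar_sub_mul_E (by omega)]
  refine smul_ne_zero ?_ <|
    (L.isOuterProduct_E r).mul_mul_ne_zero (L.Es_zero_mul_E_ne_zero r) ?_
  · rw [Ne, L.tauS_eq_zero_iff (by omega)]
    omega
  · rw [← Matrix.mul_assoc]
    exact L.trid1 r i (by omega)

/-- Both sides vanish on `E_0, …, E_{n-1}` and on `E*_{n+1}, …, E*_d`, so it suffices to choose `c`
such that they agree on `E*_n`. -/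
theorem exists_Es_zero_mul_tauA_mul_Astar_sub_eq_smul {n : ℕ} (hn : n < d) :
    ∃ c : K, c ≠ 0 ∧ L.Estar 0 * L.tauA (n + 1) * (L.Astar - L.θsN (n + 1) • 1) =
      c • (L.Estar 0 * L.tauA n) := by
  obtain ⟨i, rfl⟩ : ∃ i : Fin (d + 1), (i : ℕ) = n := ⟨⟨n, by omega⟩, rfl⟩
  obtain ⟨r, hr⟩ : ∃ r : Fin (d + 1), (r : ℕ) = i + 1 := ⟨⟨i + 1, by omega⟩, rfl⟩
  rw [← hr]
  obtain ⟨c, hc⟩ := (L.isOuterProduct_Es 0).exists_mul_mul_eq_smul (L.isOuterProduct_Es i)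
    (L.Es_zero_mul_tauA_mul_Es_ne_zero i) (L.tauA r * (L.Astar - L.θsN r • 1))
  have split : L.Estar 0 * L.tauA r * (L.Astar - L.θsN r • 1) = c • (L.Estar 0 * L.tauA i) := by
    refine sub_eq_zero.mp (L.eq_zero_of_mul_E_of_mul_Es i (fun k hk ↦ ?_) fun j hj ↦ ?_)
    · rw [Matrix.sub_mul, L.Es_zero_mul_tauA_mul_Astar_sub_mul_E_eq_zero (by omega),
        Matrix.smul_mul, Matrix.mul_assoc, L.tauA_mul_E_eq_zero (by omega) hk, Matrix.mul_zero,
        smul_zero, sub_zero]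
    · rw [Matrix.sub_mul, Matrix.smul_mul]
      obtain rfl | hj := hj.eq_or_lt
      · rw [← hc, Matrix.mul_assoc (L.Estar 0), sub_self]
      · rw [L.Es_zero_mul_tauA_mul_Astar_sub_mul_Es_eq_zero (by omega),
          L.Es_zero_mul_tauA_mul_Es_eq_zero hj, smul_zero, sub_zero]
  refine ⟨c, ?_, split⟩
  rintro rfl
  apply L.Es_zero_mul_tauA_mul_Astar_sub_mul_E_ne_zero hr (L.θsN r)
  rw [split, zero_smul, Matrix.zero_mul]

theorem trace_Es_zero_mul_mul_Es_zero (X : Matrix (Fin (d + 1)) (Fin (d + 1)) K) :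
    (L.Estar 0 * X * L.Estar 0).trace = (X * L.Estar 0).trace := by
  rw [trace_mul_cycle, L.Es_mul, if_pos rfl, trace_mul_comm]

theorem trace_tauA_succ_of_split {n : ℕ} {c : K}
    (h : L.Estar 0 * L.tauA (n + 1) * (L.Astar - L.θsN (n + 1) • 1) =
      c • (L.Estar 0 * L.tauA n)) :
    (L.θsN 0 - L.θsN (n + 1)) * (L.tauA (n + 1) * L.Estar 0).trace =
      c * (L.tauA n * L.Estar 0).trace := by
  have h0 := congrArg (fun Y ↦ (Y * L.Estar 0).trace) h
  have hθ : L.θsN 0 = L.θs 0 := L.θsN_val 0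
  simp only [Matrix.smul_mul, trace_smul, trace_Es_zero_mul_mul_Es_zero, smul_eq_mul] at h0
  rw [← h0, Matrix.mul_assoc, Astar_sub_mul_Es, Matrix.mul_smul, trace_smul,
    trace_Es_zero_mul_mul_Es_zero, smul_eq_mul, hθ]

theorem trace_tauA_mul_Es_zero_ne_zero {n : ℕ} (hn : n ≤ d) :
    (L.tauA n * L.Estar 0).trace ≠ 0 := by
  induction n with
  | zero =>
    rw [tauA, Matrix.one_mul, (L.isOuterProduct_Es 0).trace_eq_one _ (L.Es_ne 0)]
    · exact one_ne_zero
    · rw [IsIdempotentElem, L.Es_mul, if_pos rfl]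
  | succ n ih =>
    obtain ⟨c, hc, h⟩ := L.exists_Es_zero_mul_tauA_mul_Astar_sub_eq_smul hn
    refine right_ne_zero_of_mul (a := L.θsN 0 - L.θsN (n + 1)) ?_
    rw [L.trace_tauA_succ_of_split h]
    exact mul_ne_zero hc (ih (by omega))

theorem varphi_succ_of_split {n : ℕ} (hn : n < d) {c : K}
    (h : L.Estar 0 * L.tauA (n + 1) * (L.Astar - L.θsN (n + 1) • 1) =
      c • (L.Estar 0 * L.tauA n)) :
    L.varphi (n + 1) = c := by
  rw [varphi, L.trace_tauA_succ_of_split h, Nat.add_sub_cancel,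
    mul_div_cancel_right₀ _ (L.trace_tauA_mul_Es_zero_ne_zero hn.le)]

theorem varphi_succ_ne_zero {n : ℕ} (hn : n < d) : L.varphi (n + 1) ≠ 0 := by
  obtain ⟨c, hc, h⟩ := L.exists_Es_zero_mul_tauA_mul_Astar_sub_eq_smul hn
  rwa [L.varphi_succ_of_split hn h]

theorem varphiProd_ne_zero {n : ℕ} (hn : n ≤ d) : L.varphiProd n ≠ 0 :=
  Finset.prod_ne_zero_iff.mpr fun _ hj ↦
    L.varphi_succ_ne_zero ((Finset.mem_range.mp hj).trans_le hn)

theorem Es_zero_mul_tauA_mul_Astar_sub {n : ℕ} (hn : n < d) :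
    L.Estar 0 * L.tauA (n + 1) * (L.Astar - L.θsN (n + 1) • 1) =
      L.varphi (n + 1) • (L.Estar 0 * L.tauA n) := by
  obtain ⟨c, -, h⟩ := L.exists_Es_zero_mul_tauA_mul_Astar_sub_eq_smul hn
  rwa [L.varphi_succ_of_split hn h]

theorem Astar_sub_mul_tauA_mul_Es_zero {n : ℕ} (hn : n < d) :
    (L.Astar - L.θsN (n + 1) • 1) * (L.tauA (n + 1) * L.Estar 0) =
      L.varphi (n + 1) • (L.tauA n * L.Estar 0) := by
  have h := L.transpose.Es_zero_mul_tauA_mul_Astar_sub hn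
  have hθ : L.transpose.θsN (n + 1) = L.θsN (n + 1) := rfl
  apply transpose_injective
  simpa only [hθ, transpose_varphi, transpose_tauA, transpose_Estar, transpose_Astar,
    Matrix.transpose_mul, transpose_smul, transpose_sub, transpose_one] using h

theorem Astar_sub_mul_down_tauA_mul_Es_zero {n : ℕ} (hn : n < d) :
    (L.Astar - L.θsN (n + 1) • 1) * (L.down.tauA (n + 1) * L.Estar 0) =
      L.phi (n + 1) • (L.down.tauA n * L.Estar 0) := by
  rw [← L.down_varphi (by omega)]
  exact L.down.Astar_sub_mul_tauA_mul_Es_zero hn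

/-! ### The case `r = 0` and the dependence on `r` -/

theorem varphi_smul_Es_zero_mul_tauA_mul_down_tauA_mul_Es_zero {n m : ℕ} (h : n + m + 1 = d) :
    L.varphi (n + 1) • (L.Estar 0 * (L.tauA n * L.down.tauA (m + 1)) * L.Estar 0) =
      L.phi (m + 1) • (L.Estar 0 * (L.tauA (n + 1) * L.down.tauA m) * L.Estar 0) := by
  have hzero : L.Estar 0 * L.tauA (n + 1) * (L.down.tauA (m + 1) * L.Estar 0) = 0 := by
    rw [Matrix.mul_assoc, ← Matrix.mul_assoc (L.tauA _),
      L.tauA_mul_down_tauA_eq_zero (by omega) (by omega) (by omega), Matrix.zero_mul,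
      Matrix.mul_zero]
  calc L.varphi (n + 1) • (L.Estar 0 * (L.tauA n * L.down.tauA (m + 1)) * L.Estar 0)
      = L.varphi (n + 1) • (L.Estar 0 * L.tauA n) * (L.down.tauA (m + 1) * L.Estar 0) := by
        simp only [Matrix.smul_mul, Matrix.mul_assoc]
    _ = L.Estar 0 * L.tauA (n + 1) * L.Astar * (L.down.tauA (m + 1) * L.Estar 0) := by
        rw [← L.Es_zero_mul_tauA_mul_Astar_sub (by omega),
          mul_sub_smul_one_mul_of_mul_eq_zero hzero]
    _ = L.Estar 0 * L.tauA (n + 1) *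
          ((L.Astar - L.θsN (m + 1) • 1) * (L.down.tauA (m + 1) * L.Estar 0)) := by
        rw [← Matrix.mul_assoc _ (L.Astar - _), mul_sub_smul_one_mul_of_mul_eq_zero hzero]
    _ = L.phi (m + 1) • (L.Estar 0 * (L.tauA (n + 1) * L.down.tauA m) * L.Estar 0) := by
        rw [L.Astar_sub_mul_down_tauA_mul_Es_zero (by omega)]
        simp only [Matrix.mul_smul, Matrix.mul_assoc]

theorem varphiProd_smul_Es_zero_mul_tauA_mul_down_tauA_mul_Es_zero {n : ℕ} (hn : n ≤ d) :
    L.varphiProd n • (L.Estar 0 * (L.tauA 0 * L.down.tauA d) * L.Estar 0) =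
      L.phiRevProd n • (L.Estar 0 * (L.tauA n * L.down.tauA (d - n)) * L.Estar 0) := by
  induction n with
  | zero => simp [varphiProd, phiRevProd]
  | succ n ih =>
    have hd : d - n = d - (n + 1) + 1 := by omega
    rw [varphiProd, Finset.prod_range_succ, mul_comm, mul_smul, ← varphiProd, ih (by omega),
      smul_comm, hd, L.varphi_smul_Es_zero_mul_tauA_mul_down_tauA_mul_Es_zero (by omega), ← hd,
      smul_smul, phiRevProd, phiRevProd, Finset.prod_range_succ]

theorem Es_zero_mul_tauA_zero_mul_down_tauA_mul_Es_zero {n : ℕ} (hn : n ≤ d) :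
    L.Estar 0 * (L.tauA 0 * L.down.tauA d) * L.Estar 0 =
      (L.phiRevProd n / L.varphiProd n) •
        (L.Estar 0 * (L.tauA n * L.down.tauA (d - n)) * L.Estar 0) := by
  rw [div_eq_inv_mul, mul_smul,
    ← L.varphiProd_smul_Es_zero_mul_tauA_mul_down_tauA_mul_Es_zero hn,
    inv_smul_smul₀ (L.varphiProd_ne_zero hn)]

theorem tauA_mul_dual_tauA_mul_E_zero_eq_zero {n m : ℕ} (hn : n ≤ d + 1) (h : m < n) :
    L.tauA n * (L.dual.tauA m * L.E 0) = 0 := by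
  rw [tauA_eq_sum, Finset.sum_mul]
  refine Finset.sum_eq_zero fun i _ ↦ ?_
  rcases lt_or_ge (i : ℕ) n with hi | hi
  · rw [(L.tauS_eq_zero_iff hn).mpr hi, zero_smul, Matrix.zero_mul]
  · have hE := L.dual.Es_mul_aeval_mul_Es_eq_zero (p := L.dual.tauPoly m) (i := i) (j := 0)
      (by rw [natDegree_tauPoly, Fin.val_zero]; omega)
    rw [← tauA_eq_aeval, dual_Estar, dual_Estar] at hE
    rw [Matrix.smul_mul, ← Matrix.mul_assoc, hE, smul_zero]

theorem Es_zero_mul_tauA_mul_dual_tauA_mul_E_zero {n : ℕ} (hn : n ≤ d) :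
    L.Estar 0 * L.tauA n * (L.dual.tauA n * L.E 0) = L.varphiProd n • (L.Estar 0 * L.E 0) := by
  induction n with
  | zero => simp [tauA, varphiProd]
  | succ n ih =>
    have hzero : L.Estar 0 * L.tauA (n + 1) * (L.dual.tauA n * L.E 0) = 0 := by
      rw [Matrix.mul_assoc, L.tauA_mul_dual_tauA_mul_E_zero_eq_zero (by omega) (by omega),
        Matrix.mul_zero]
    calc L.Estar 0 * L.tauA (n + 1) * (L.dual.tauA (n + 1) * L.E 0)
        = L.Estar 0 * L.tauA (n + 1) * (L.Astar - L.dual.θN n • 1) * (L.dual.tauA n * L.E 0) := by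
          rw [L.dual.tauA_succ', dual_A]
          simp only [Matrix.mul_assoc]
      _ = L.Estar 0 * L.tauA (n + 1) * (L.Astar - L.θsN (n + 1) • 1) *
            (L.dual.tauA n * L.E 0) := by
          rw [mul_sub_smul_one_mul_of_mul_eq_zero hzero,
            mul_sub_smul_one_mul_of_mul_eq_zero hzero]
      _ = L.varphiProd (n + 1) • (L.Estar 0 * L.E 0) := by
          rw [L.Es_zero_mul_tauA_mul_Astar_sub hn, Matrix.smul_mul, ih (by omega), smul_smul,
            varphiProd, varphiProd, Finset.prod_range_succ, mul_comm]

theorem Es_zero_mul_E_last_mul_Es_last_mul_E_zero :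
    L.Estar 0 * L.E (Fin.last d) * L.Estar (Fin.last d) * L.E 0 =
      (L.varphiProd d / (L.tauS d (L.θ (Fin.last d)) * L.tausS d (L.θs (Fin.last d)))) •
        (L.Estar 0 * L.E 0) := by
  have hτ : L.tauS d (L.θ (Fin.last d)) ≠ 0 := by
    simp [L.tauS_eq_zero_iff]
  have hτs : L.dual.tauS d (L.dual.θ (Fin.last d)) ≠ 0 := by
    simp [L.dual.tauS_eq_zero_iff, -dual_θ]
  have h := L.Es_zero_mul_tauA_mul_dual_tauA_mul_E_zero le_rfl
  rw [tauA_last, tauA_last, dual_E, Matrix.mul_smul, Matrix.smul_mul, Matrix.smul_mul,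
    Matrix.mul_smul, smul_smul, ← Matrix.mul_assoc] at h
  rw [div_eq_inv_mul, mul_smul, ← h]
  exact (inv_smul_smul₀ (mul_ne_zero hτ hτs) _).symm

end LeonardSystem

/-- `E*_0 E_d E*_d E_r = (φ/(τ_d(θ_d)τ*_d(θ*_d))) ⬝ (ϕ_d⋯ϕ_{d-r+1})/(φ_1⋯φ_r) ⬝ E*_0 E_r`. -/
theorem LeonardSystem.simplify_Es0EdEsdEr {K : Type*} [Field K] {d : ℕ}
    (L : LeonardSystem K d) :
    ∀ r : Fin (d+1),
      L.Estar 0 * L.E (Fin.last d) * L.Estar (Fin.last d) * L.E r =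
        (L.varphiProd d / (L.tauS d (L.θ (Fin.last d)) * L.tausS d (L.θs (Fin.last d))) *
          (L.phiRevProd (r : ℕ) / L.varphiProd (r : ℕ))) • (L.Estar 0 * L.E r) := by
  intro r
  set c := L.varphiProd d / (L.tauS d (L.θ (Fin.last d)) * L.tausS d (L.θs (Fin.last d)))
  have last : L.Estar (Fin.last d) * (L.tauA r * L.down.tauA (d - r)) * L.Estar 0 =
      L.Estar (Fin.last d) * (L.tauA 0 * L.down.tauA d) * L.Estar 0 := by
    rw [L.Es_last_mul_tauA_mul_down_tauA_mul_Es_zero (by omega),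
      L.Es_last_mul_tauA_mul_down_tauA_mul_Es_zero (by omega)]
  have base : L.Estar 0 * L.E (Fin.last d) * L.Estar (Fin.last d) *
        (L.tauA 0 * L.down.tauA d) * L.Estar 0 =
      c • (L.Estar 0 * (L.tauA 0 * L.down.tauA d) * L.Estar 0) :=
    (L.mul_E_eq_smul_iff _ 0 c).mp L.Es_zero_mul_E_last_mul_Es_last_mul_E_zero
  refine (L.mul_E_eq_smul_iff _ r _).mpr ?_
  rw [Matrix.mul_assoc, Matrix.mul_assoc, ← Matrix.mul_assoc (L.Estar (Fin.last d)), last,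
    ← Matrix.mul_assoc, ← Matrix.mul_assoc, base, mul_smul,
    L.Es_zero_mul_tauA_zero_mul_down_tauA_mul_Es_zero r.is_le]
end

section
/- Let Φ be a Leonard system with bilinear form ⟨·,·⟩, and let ξ_0 ∈ E_0V, ξ_d ∈ E_dV, ξ*_0 ∈ E*_0V, ξ*_d ∈ E*_dV be nonzero vectors. Then ⟨ξ_0,ξ*_0⟩, ⟨ξ_0,ξ*_d⟩, ⟨ξ_d,ξ*_0⟩, ⟨ξ_d,ξ*_d⟩, ⟨ξ_0,ξ_0⟩, ⟨ξ_d,ξ_d⟩, ⟨ξ*_0,ξ*_0⟩, ⟨ξ*_d,ξ*_d⟩ are all nonzero. -/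
open Matrix Polynomial

/-!
For an eigenvector `x` of a self-adjoint `A`, the subspace `ker ⟨x, ·⟩` is `A`-invariant. As `A` is
irreducible tridiagonal with respect to the lines `E*_i V`, the only `A`-invariant subspace
containing `E*_0 V` or `E*_d V` is `V` itself. So if `⟨x, ξ*_0⟩` or `⟨x, ξ*_d⟩` vanished, `x` would
lie in the radical of the form, which is zero because every endomorphism has an adjoint. For the
norms, distinct eigenspaces of `A` are orthogonal, so if `⟨x, x⟩` vanished, `x` would again be
orthogonal to every `E_i V`.
-/

open Module

/-- `a` is irreducible (lower) Hessenberg with respect to the idempotents `e i`: its block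
`e j * a * e i` vanishes below the first subdiagonal `j = i + 1` and is nonzero on it. -/
structure IsIrreducibleHessenberg {R : Type*} [MulZeroClass R] {d : ℕ}
    (e : Fin (d + 1) → R) (a : R) : Prop where
  mul_mul_eq_zero : ∀ (i : Fin d) (j : Fin (d + 1)), i.succ < j → e j * a * e i.castSucc = 0
  mul_mul_ne_zero : ∀ i : Fin d, e i.succ * a * e i.castSucc ≠ 0

/-- `a` is irreducible tridiagonal with respect to the `e i`. The condition above the diagonal is
encoded as the Hessenberg condition for the reversed family. -/
structure IsIrreducibleTridiagonal {R : Type*} [MulZeroClass R] {d : ℕ}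
    (e : Fin (d + 1) → R) (a : R) : Prop where
  hessenberg : IsIrreducibleHessenberg e a
  hessenberg_rev : IsIrreducibleHessenberg (fun i ↦ e i.rev) a

/-- `A` is diagonalizable with distinct eigenvalues `θ i`, the `e i` being the projections onto the
eigenspaces. These may have any dimension; `A` is multiplicity-free when all the `e i` have
rank one. -/
structure IsSpectralDecomposition {ι K V : Type*} [Fintype ι] [Field K] [AddCommGroup V]
    [Module K V] (A : End K V) (e : ι → End K V) (θ : ι → K) : Prop where
  idempotents : CompleteOrthogonalIdempotents e
  injective : Function.Injective θ
  eq_sum : A = ∑ i, θ i • e i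

section Semiring

variable {ι R M : Type*} [Semiring R] [AddCommMonoid M] [Module R M] {e : ι → End R M}

lemma apply_eq_self_of_mem_range (he : OrthogonalIdempotents e) {i : ι} {x : M}
    (hx : x ∈ (e i).range) : e i x = x :=
  (LinearMap.IsIdempotentElem.mem_range_iff (he.idem i)).mp hx

lemma apply_eq_zero_of_mem_range (he : OrthogonalIdempotents e) {i j : ι} (hij : i ≠ j) {x : M}
    (hx : x ∈ (e j).range) : e i x = 0 := by
  rw [← apply_eq_self_of_mem_range he hx, ← End.mul_apply, he.ortho hij, LinearMap.zero_apply]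

lemma eq_top_of_forall_range_le [Fintype ι] (hsum : ∑ i, e i = 1) {W : Submodule R M}
    (hW : ∀ i, (e i).range ≤ W) : W = ⊤ := by
  refine eq_top_iff.mpr fun w _ ↦ ?_
  rw [← End.one_apply (R := R) w, ← hsum, LinearMap.sum_apply]
  exact W.sum_mem fun i _ ↦ hW i (LinearMap.mem_range_self _ w)

end Semiring

lemma apply_mem_of_forall_ne_apply_mem {ι R M : Type*} [Fintype ι] [Ring R] [AddCommGroup M]
    [Module R M] {e : ι → End R M} (hsum : ∑ i, e i = 1) {W : Submodule R M} {w : M}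
    (hw : w ∈ W) {i : ι} (h : ∀ j ≠ i, e j w ∈ W) : e i w ∈ W := by
  classical
  have hsplit : e i w + ∑ j ∈ Finset.univ.erase i, e j w = w := by
    rw [Finset.add_sum_erase _ (fun j ↦ e j w) (Finset.mem_univ i), ← LinearMap.sum_apply, hsum,
      End.one_apply]
  rw [eq_sub_of_add_eq hsplit]
  exact W.sub_mem hw (W.sum_mem fun j hj ↦ h j (Finset.ne_of_mem_erase hj))

section Field

variable {ι K V : Type*} [Field K] [AddCommGroup V] [Module K V] {e : ι → End K V}

lemma linearIndependent_of_mem_range (he : OrthogonalIdempotents e) {v : ι → V}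
    (hv : ∀ i, v i ≠ 0) (hev : ∀ i, v i ∈ (e i).range) : LinearIndependent K v := by
  rw [linearIndependent_iff']
  intro s g hg i hi
  have hgi : e i (∑ j ∈ s, g j • v j) = g i • v i := by
    rw [map_sum, Finset.sum_eq_single_of_mem i hi, map_smul, apply_eq_self_of_mem_range he (hev i)]
    intro j _ hji
    rw [map_smul, apply_eq_zero_of_mem_range he hji.symm (hev j), smul_zero]
  rw [hg, map_zero] at hgi
  exact (smul_eq_zero.mp hgi.symm).resolve_right (hv i)

lemma finrank_range_eq_one [Fintype ι] (he : OrthogonalIdempotents e) (hne : ∀ i, e i ≠ 0)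
    (hcard : Fintype.card ι = finrank K V) (i : ι) : finrank K (e i).range = 1 := by
  have hnonzero (j : ι) : ∃ v ∈ (e j).range, v ≠ 0 :=
    Submodule.exists_mem_ne_zero_of_ne_bot (LinearMap.range_eq_bot.not.mpr (hne j))
  choose v hev hv using hnonzero
  have : Nonempty ι := ⟨i⟩
  have hspan : Submodule.span K (Set.range v) = ⊤ :=
    (linearIndependent_of_mem_range he hv hev).span_eq_top_of_card_eq_finrank hcard
  have hrange : (e i).range = K ∙ v i := by
    refine le_antisymm ?_ ((Submodule.span_singleton_le_iff_mem _ _).mpr (hev i))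
    rw [LinearMap.range_eq_map, ← hspan, Submodule.map_span_le]
    rintro _ ⟨j, rfl⟩
    obtain rfl | hij := eq_or_ne i j
    · rw [apply_eq_self_of_mem_range he (hev i)]
      exact Submodule.mem_span_singleton_self _
    · rw [apply_eq_zero_of_mem_range he hij (hev j)]
      exact zero_mem _
  rw [hrange, finrank_span_singleton (hv i)]

lemma le_of_mem_of_finrank_eq_one {S W : Submodule K V} (hS : finrank K S = 1) {x : V}
    (hx : x ≠ 0) (hxS : x ∈ S) (hxW : x ∈ W) : S ≤ W := by
  refine (Submodule.isAtom_iff_finrank_eq_one.mpr hS).not_disjoint_iff_le.mp fun hdisj ↦ hx ?_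
  exact Submodule.disjoint_def.mp hdisj x hxS hxW

lemma IsSpectralDecomposition.apply_of_mem_range [Fintype ι] {A : End K V} {θ : ι → K}
    (hA : IsSpectralDecomposition A e θ) {i : ι} {x : V} (hx : x ∈ (e i).range) :
    A x = θ i • x := by
  have he := hA.idempotents.toOrthogonalIdempotents
  rw [hA.eq_sum, LinearMap.sum_apply, Finset.sum_eq_single_of_mem i (Finset.mem_univ i),
    LinearMap.smul_apply, apply_eq_self_of_mem_range he hx]
  intro j _ hji
  rw [LinearMap.smul_apply, apply_eq_zero_of_mem_range he hji hx, smul_zero]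

end Field

section Hessenberg

variable {K V : Type*} [Field K] [AddCommGroup V] [Module K V] {d : ℕ}
  {e : Fin (d + 1) → End K V} {A : End K V} {W : Submodule K V}

lemma IsIrreducibleHessenberg.range_succ_le (hA : IsIrreducibleHessenberg e A)
    (he : CompleteOrthogonalIdempotents e) (hW : W ∈ A.invtSubmodule) {i : Fin d}
    (hrank : finrank K (e i.succ).range = 1) (hle : ∀ j < i.succ, (e j).range ≤ W) :
    (e i.succ).range ≤ W := by
  obtain ⟨u, hu⟩ : ∃ u, e i.succ (A (e i.castSucc u)) ≠ 0 :=
    DFunLike.ne_iff.mp (hA.mul_mul_ne_zero i)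
  have hAu : A (e i.castSucc u) ∈ W :=
    hW (hle _ i.castSucc_lt_succ (LinearMap.mem_range_self _ u))
  refine le_of_mem_of_finrank_eq_one hrank hu (LinearMap.mem_range_self _ _) ?_
  refine apply_mem_of_forall_ne_apply_mem he.complete hAu fun j hj ↦ ?_
  obtain hlt | hgt := hj.lt_or_gt
  · exact hle j hlt (LinearMap.mem_range_self _ _)
  · have hzero : e j (A (e i.castSucc u)) = 0 := LinearMap.congr_fun (hA.mul_mul_eq_zero i j hgt) u
    exact hzero ▸ W.zero_mem

lemma IsIrreducibleHessenberg.eq_top_of_mem_invtSubmodule (hA : IsIrreducibleHessenberg e A)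
    (he : CompleteOrthogonalIdempotents e) (hrank : ∀ i, finrank K (e i).range = 1)
    (hW : W ∈ A.invtSubmodule) {y : V} (hy : y ≠ 0) (hey : y ∈ (e 0).range) (hyW : y ∈ W) :
    W = ⊤ := by
  refine eq_top_of_forall_range_le he.complete fun i ↦ ?_
  induction i using WellFoundedLT.induction with
  | ind i ih =>
    cases i using Fin.cases with
    | zero => exact le_of_mem_of_finrank_eq_one (hrank 0) hy hey hyW
    | succ i => exact hA.range_succ_le he hW (hrank i.succ) ih

end Hessenberg

section CommRing

variable {R M : Type*} [CommRing R] [AddCommGroup M] [Module R M] {B : LinearMap.BilinForm R M}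
  {A : End R M}

lemma apply_eq_zero_of_isSelfAdjoint_of_ne [IsDomain R] (hA : B.IsSelfAdjoint A) {a b : R}
    (hab : a ≠ b) {x y : M} (hx : A x = a • x) (hy : A y = b • y) : B x y = 0 := by
  have h : a * B x y = b * B x y := by simpa [hx, hy] using hA x y
  by_contra hxy
  exact hab (mul_right_cancel₀ hxy h)

lemma ker_apply_mem_invtSubmodule (hA : B.IsSelfAdjoint A) {a : R} {x : M} (hx : A x = a • x) :
    (B x).ker ∈ A.invtSubmodule := by
  intro v (hv : B x v = 0)
  calc B x (A v) = B (A x) v := (hA x v).symm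
    _ = 0 := by rw [hx, map_smul, LinearMap.smul_apply, hv, smul_zero]

lemma ker_apply_ne_top (hB : B.SeparatingLeft) {x : M} (hx : x ≠ 0) : (B x).ker ≠ ⊤ :=
  LinearMap.ker_eq_top.not.mpr (mt (LinearMap.separatingLeft_iff_linear_nontrivial.mp hB x) hx)

end CommRing

section BilinForm

variable {K V : Type*} [Field K] [AddCommGroup V] [Module K V] {B : LinearMap.BilinForm K V}
  {A : End K V}

lemma separatingLeft_of_forall_exists_isAdjointPair (hB : B ≠ 0)
    (hadj : ∀ f : End K V, ∃ g : V → V, B.IsAdjointPair B f g) : B.SeparatingLeft := by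
  intro x hx
  by_contra hx0
  have : Nontrivial V := ⟨x, 0, hx0⟩
  refine hB (LinearMap.ext₂ fun w v ↦ ?_)
  obtain ⟨f, rfl⟩ := IsSimpleModule.toSpanSingleton_surjective (End K V) hx0 w
  obtain ⟨g, hfg⟩ := hadj f
  exact (hfg x v).trans (hx (g v))

lemma IsSpectralDecomposition.apply_self_ne_zero {ι : Type*} [Fintype ι] {e : ι → End K V}
    {θ : ι → K} (hAe : IsSpectralDecomposition A e θ) (hB : B.SeparatingLeft)
    (hA : B.IsSelfAdjoint A) {i : ι} (hrank : finrank K (e i).range = 1) {x : V} (hx : x ≠ 0)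
    (hxe : x ∈ (e i).range) : B x x ≠ 0 := by
  intro hxx
  refine ker_apply_ne_top hB hx (eq_top_of_forall_range_le hAe.idempotents.complete fun j ↦ ?_)
  obtain rfl | hij := eq_or_ne i j
  · exact le_of_mem_of_finrank_eq_one hrank hx hxe hxx
  · intro y hy
    exact apply_eq_zero_of_isSelfAdjoint_of_ne hA (hAe.injective.ne hij)
      (hAe.apply_of_mem_range hxe) (hAe.apply_of_mem_range hy)

lemma IsIrreducibleHessenberg.apply_ne_zero {d : ℕ} {e : Fin (d + 1) → End K V}
    (hAe : IsIrreducibleHessenberg e A) (he : CompleteOrthogonalIdempotents e)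
    (hrank : ∀ i, finrank K (e i).range = 1) (hB : B.SeparatingLeft) (hA : B.IsSelfAdjoint A)
    {a : K} {x y : V} (hx : x ≠ 0) (hAx : A x = a • x) (hy : y ≠ 0) (hye : y ∈ (e 0).range) :
    B x y ≠ 0 := fun hxy ↦
  ker_apply_ne_top hB hx <|
    hAe.eq_top_of_mem_invtSubmodule he hrank (ker_apply_mem_invtSubmodule hA hAx) hy hye hxy

lemma IsIrreducibleTridiagonal.apply_ne_zero {d : ℕ} {e : Fin (d + 1) → End K V}
    (hAe : IsIrreducibleTridiagonal e A) (he : CompleteOrthogonalIdempotents e)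
    (hrank : ∀ i, finrank K (e i).range = 1) (hB : B.SeparatingLeft) (hA : B.IsSelfAdjoint A)
    {a : K} {x y : V} (hx : x ≠ 0) (hAx : A x = a • x) (hy : y ≠ 0) {j : Fin (d + 1)}
    (hj : j = 0 ∨ j = Fin.last d) (hye : y ∈ (e j).range) : B x y ≠ 0 := by
  obtain rfl | rfl := hj
  · exact hAe.hessenberg.apply_ne_zero he hrank hB hA hx hAx hy hye
  · have he_rev : CompleteOrthogonalIdempotents (fun i : Fin (d + 1) ↦ e i.rev) :=
      (CompleteOrthogonalIdempotents.equiv Fin.revPerm).mpr he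
    exact hAe.hessenberg_rev.apply_ne_zero he_rev (fun i ↦ hrank i.rev) hB hA hx hAx hy
      (by rwa [Fin.rev_zero])

end BilinForm

section Matrix

variable {n K : Type*} [Fintype n] [Field K]

lemma separatingLeft_of_forall_mulVec {B : LinearMap.BilinForm K (n → K)} (hB : B ≠ 0)
    {σ : Matrix n n K → Matrix n n K} (hσ : ∀ X u v, B (X *ᵥ u) v = B u (σ X *ᵥ v)) :
    B.SeparatingLeft := by
  classical
  exact separatingLeft_of_forall_exists_isAdjointPair hB fun f ↦
    ⟨(σ (LinearMap.toMatrix' f)).mulVec, fun u v ↦ by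
      rw [← hσ, LinearMap.toMatrix'_mulVec]⟩

lemma isSpectralDecomposition_toLinAlgEquiv' [DecidableEq n] {ι : Type*} [Fintype ι]
    {A : Matrix n n K} {e : ι → Matrix n n K} {θ : ι → K} (he : CompleteOrthogonalIdempotents e)
    (hθ : Function.Injective θ) (hA : A = ∑ i, θ i • e i) :
    IsSpectralDecomposition (toLinAlgEquiv' A) (fun i ↦ toLinAlgEquiv' (e i)) θ where
  idempotents := he.map (toLinAlgEquiv' : _ ≃ₐ[K] End K (n → K)).toRingEquiv.toRingHom
  injective := hθ
  eq_sum := by simp only [hA, map_sum, map_smul]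

end Matrix

namespace LeonardSystem

variable {K : Type*} [Field K] {d : ℕ} (L : LeonardSystem K d)

lemma isSpectralDecomposition_A : IsSpectralDecomposition (toLinAlgEquiv' L.A)
    (fun i ↦ toLinAlgEquiv' (L.E i)) L.θ :=
  isSpectralDecomposition_toLinAlgEquiv' ⟨OrthogonalIdempotents.iff_mul_eq.mpr L.E_mul, L.E_sum⟩
    L.θ_inj L.A_eq

lemma isSpectralDecomposition_Astar : IsSpectralDecomposition (toLinAlgEquiv' L.Astar)
    (fun i ↦ toLinAlgEquiv' (L.Estar i)) L.θs :=
  isSpectralDecomposition_toLinAlgEquiv' ⟨OrthogonalIdempotents.iff_mul_eq.mpr L.Es_mul, L.Es_sum⟩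
    L.θs_inj L.As_eq

lemma finrank_range_E (i : Fin (d + 1)) : finrank K (toLinAlgEquiv' (L.E i)).range = 1 :=
  finrank_range_eq_one L.isSpectralDecomposition_A.idempotents.1
    (fun j ↦ (map_ne_zero_iff _ (AlgEquiv.injective _)).mpr (L.E_ne j)) (by simp) i

lemma finrank_range_Estar (i : Fin (d + 1)) : finrank K (toLinAlgEquiv' (L.Estar i)).range = 1 :=
  finrank_range_eq_one L.isSpectralDecomposition_Astar.idempotents.1
    (fun j ↦ (map_ne_zero_iff _ (AlgEquiv.injective _)).mpr (L.Es_ne j)) (by simp) i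

lemma isIrreducibleTridiagonal_Estar_A :
    IsIrreducibleTridiagonal (fun i ↦ toLinAlgEquiv' (L.Estar i)) (toLinAlgEquiv' L.A) := by
  refine ⟨⟨fun i j hij ↦ ?_, fun i ↦ ?_⟩, ⟨fun i j hij ↦ ?_, fun i ↦ ?_⟩⟩ <;>
    simp only [← map_mul, EmbeddingLike.map_eq_zero_iff, ne_eq]
  · rw [Fin.lt_def, Fin.val_succ] at hij
    exact L.strid0 _ _ (by rw [Fin.val_castSucc]; omega)
  · exact L.strid1 _ _ (by simp)
  · rw [Fin.lt_def, Fin.val_succ] at hij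
    exact L.strid0 _ _ (by simp only [Fin.val_rev, Fin.val_castSucc]; omega)
  · exact L.strid1 _ _ (by simp only [Fin.val_rev, Fin.val_succ, Fin.val_castSucc]; omega)

theorem bilin_ne_zero_general {K V : Type*} [Field K] [AddCommGroup V] [Module K V] {d : ℕ}
    {A Astar : End K V} {E Estar : Fin (d + 1) → End K V} {θ θs : Fin (d + 1) → K}
    (hA : IsSpectralDecomposition A E θ) (hAs : IsSpectralDecomposition Astar Estar θs)
    (hE : ∀ i, finrank K (E i).range = 1) (hEs : ∀ i, finrank K (Estar i).range = 1)
    (htrid : IsIrreducibleTridiagonal Estar A) {B : LinearMap.BilinForm K V}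
    (hB : B.SeparatingLeft) (hBA : B.IsSelfAdjoint A) (hBAs : B.IsSelfAdjoint Astar)
    {i j : Fin (d + 1)} {ξi ξj ξs0 ξsd : V}
    (hξi : ξi ≠ 0) (hξj : ξj ≠ 0) (hξs0 : ξs0 ≠ 0) (hξsd : ξsd ≠ 0)
    (hEi : ξi ∈ (E i).range) (hEj : ξj ∈ (E j).range)
    (hEs0 : ξs0 ∈ (Estar 0).range) (hEsd : ξsd ∈ (Estar (Fin.last d)).range) :
    B ξi ξs0 ≠ 0 ∧ B ξi ξsd ≠ 0 ∧ B ξj ξs0 ≠ 0 ∧ B ξj ξsd ≠ 0 ∧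
    B ξi ξi ≠ 0 ∧ B ξj ξj ≠ 0 ∧ B ξs0 ξs0 ≠ 0 ∧ B ξsd ξsd ≠ 0 := by
  have cross {k l : Fin (d + 1)} {x y : V} (hx : x ≠ 0) (hxE : x ∈ (E k).range) (hy : y ≠ 0)
      (hl : l = 0 ∨ l = Fin.last d) (hyE : y ∈ (Estar l).range) : B x y ≠ 0 :=
    htrid.apply_ne_zero hAs.idempotents hEs hB hBA hx (hA.apply_of_mem_range hxE) hy hl hyE
  exact ⟨cross hξi hEi hξs0 (.inl rfl) hEs0, cross hξi hEi hξsd (.inr rfl) hEsd,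
    cross hξj hEj hξs0 (.inl rfl) hEs0, cross hξj hEj hξsd (.inr rfl) hEsd,
    hA.apply_self_ne_zero hB hBA (hE i) hξi hEi, hA.apply_self_ne_zero hB hBA (hE j) hξj hEj,
    hAs.apply_self_ne_zero hB hBAs (hEs _) hξs0 hEs0,
    hAs.apply_self_ne_zero hB hBAs (hEs _) hξsd hEsd⟩

end LeonardSystem

/-- For nonzero `ξ_0 ∈ E_0V`, `ξ_d ∈ E_dV`, `ξ*_0 ∈ E*_0V`, `ξ*_d ∈ E*_dV`, the
eight inner products `⟨ξ_0,ξ*_0⟩, ⟨ξ_0,ξ*_d⟩, ⟨ξ_d,ξ*_0⟩, ⟨ξ_d,ξ*_d⟩, ⟨ξ_0,ξ_0⟩,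
⟨ξ_d,ξ_d⟩, ⟨ξ*_0,ξ*_0⟩, ⟨ξ*_d,ξ*_d⟩` are all nonzero. -/
theorem LeonardSystem.bilin_ne_zero {K : Type*} [Field K] {d : ℕ}
    (L : LeonardSystem K d)
    (σ : (Matrix (Fin (d+1)) (Fin (d+1)) K) →ₗ[K] Matrix (Fin (d+1)) (Fin (d+1)) K)
    (hanti : ∀ X Y, σ (X * Y) = σ Y * σ X) (hbij : Function.Bijective σ)
    (hA : σ L.A = L.A) (hAs : σ L.Astar = L.Astar)
    (B : (Fin (d+1) → K) →ₗ[K] (Fin (d+1) → K) →ₗ[K] K) (hB : B ≠ 0)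
    (hcomp : ∀ (X : Matrix (Fin (d+1)) (Fin (d+1)) K) (u v : Fin (d+1) → K),
      B (X.mulVec u) v = B u ((σ X).mulVec v))
    (ξ0 ξd ξs0 ξsd : Fin (d+1) → K)
    (hξ0 : ξ0 ≠ 0) (hξd : ξd ≠ 0) (hξs0 : ξs0 ≠ 0) (hξsd : ξsd ≠ 0)
    (hE0 : (L.E 0).mulVec ξ0 = ξ0) (hEd : (L.E (Fin.last d)).mulVec ξd = ξd)
    (hEs0 : (L.Estar 0).mulVec ξs0 = ξs0) (hEsd : (L.Estar (Fin.last d)).mulVec ξsd = ξsd) :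
    B ξ0 ξs0 ≠ 0 ∧ B ξ0 ξsd ≠ 0 ∧ B ξd ξs0 ≠ 0 ∧ B ξd ξsd ≠ 0 ∧
    B ξ0 ξ0 ≠ 0 ∧ B ξd ξd ≠ 0 ∧ B ξs0 ξs0 ≠ 0 ∧ B ξsd ξsd ≠ 0 := by
  exact bilin_ne_zero_general L.isSpectralDecomposition_A L.isSpectralDecomposition_Astar
    L.finrank_range_E L.finrank_range_Estar L.isIrreducibleTridiagonal_Estar_A
    (separatingLeft_of_forall_mulVec hB hcomp) (fun u v ↦ by simpa [hA] using hcomp L.A u v)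
    (fun u v ↦ by simpa [hAs] using hcomp L.Astar u v) hξ0 hξd hξs0 hξsd
    ⟨ξ0, hE0⟩ ⟨ξd, hEd⟩ ⟨ξs0, hEs0⟩ ⟨ξsd, hEsd⟩
end
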